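/- arXiv:1907.06761 — 4 statements merged into one kernel-verified Lean document; each statement's English description precedes it below -/
import Mathlib

section
/- Suppose n is odd. For each integer k with 0 ≤ k ≤ (3n−1)/2, set m := (3n−1)/2 − k and x_k := (−1)^{m(m+1)/2} (λ^{(n−1)/2})^m ∈ ℂ. Then for all integers i, j with 0 ≤ i ≤ n and 0 ≤ j ≤ (n−1)/2: if i−j < n/2 then (−1)^{ij} x_{i+j} + (−1)^{i(j−1)} λ^j x_{n+i−j} = 0, and if i−j > n/2 then (−1)^{ij} x_{i+j} + (−1)^{i(j−1)} λ^i x_{2n+j−i} = 0. (This exhibits a nontrivial solution of the homogeneous linear system arising from products of orbit sums of degrees n and 2n in the skew polynomial ring.) -/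
noncomputable section

/-- `lam n = exp(2πi/n)`, a primitive `n`-th root of unity. -/
def lam (n : ℕ) : ℂ := Complex.exp (2 * (Real.pi : ℂ) * Complex.I / (n : ℂ))

/-- The candidate solution: with `m = (3n-1)/2 - k`,
`x_k = (-1)^(m(m+1)/2) (λ^((n-1)/2))^m`. -/
def xSol (n k : ℕ) : ℂ :=
  (-1 : ℂ) ^ (((3 * n - 1) / 2 - k) * ((3 * n - 1) / 2 - k + 1) / 2) *
    (lam n ^ ((n - 1) / 2)) ^ ((3 * n - 1) / 2 - k)

lemma tri_succ (m : ℕ) : (m + 1) * (m + 1 + 1) / 2 = m * (m + 1) / 2 + (m + 1) := by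
  rw [show (m + 1) * (m + 1 + 1) = m * (m + 1) + (m + 1) * 2 by ring,
    Nat.add_mul_div_right _ _ (by norm_num)]

lemma sgn_even (b e : ℕ) : (-1 : ℂ) ^ ((b + 2 * e) * (b + 2 * e + 1) / 2) =
    (-1 : ℂ) ^ (b * (b + 1) / 2) * (-1) ^ e := by
  induction e with
  | zero => simp
  | succ e ih =>
    rw [show b + 2 * (e + 1) = b + 2 * e + 1 + 1 by ring, tri_succ, tri_succ, add_assoc, pow_add,
      ih, Odd.neg_one_pow (n := b + 2 * e + 1 + _) ⟨b + 2 * e + 1, by ring⟩]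
    ring

lemma sgn_odd (b e : ℕ) : (-1 : ℂ) ^ ((b + 2 * e + 1) * (b + 2 * e + 1 + 1) / 2) =
    (-1 : ℂ) ^ (b * (b + 1) / 2) * (-1) ^ (b + e + 1) := by
  rw [tri_succ, pow_add, sgn_even]
  have : ((-1 : ℂ) ^ e) * (-1) ^ e = 1 := by rw [← mul_pow]; simp
  rw [show b + 2 * e + 1 = (b + e + 1) + e by ring, pow_add _ (b + e + 1) e]
  linear_combination ((-1 : ℂ) ^ (b * (b + 1) / 2) * (-1) ^ (b + e + 1)) * this

lemma lam_pow (n : ℕ) (hn : n ≠ 0) : lam n ^ n = 1 :=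
  (Complex.isPrimitiveRoot_exp n hn).pow_eq_one

lemma pow_red {L : ℂ} {n a c u v : ℕ} (hL : L ^ n = 1) (h : a + n * u = n * v + c) :
    L ^ a = L ^ c := by
  have h3 := congrArg (fun t => L ^ t) h
  simpa only [pow_add, pow_mul, hL, one_pow, mul_one, one_mul] using h3

lemma sgn_opp (a i p : ℕ) (h : a + i = 2 * p + 1) : (-1 : ℂ) ^ a = -(-1) ^ i := by
  have h1 : (-1 : ℂ) ^ a * (-1) ^ i = -1 := by
    rw [← pow_add, h]; exact Odd.neg_one_pow ⟨p, rfl⟩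
  have h2 : ((-1 : ℂ) ^ i) * (-1) ^ i = 1 := by rw [← mul_pow]; simp
  linear_combination (-1 : ℂ) ^ i * h1 - (-1 : ℂ) ^ a * h2

/-- If `n` is odd, the vector `x_k` solves the homogeneous system arising from
products of orbit sums of degrees `n` and `2n`:
`0 = (-1)^(ij) x_(i+j) + (-1)^(i(j-1)) λ^j x_(n+i-j)` when `i - j < n/2`, and
`0 = (-1)^(ij) x_(i+j) + (-1)^(i(j-1)) λ^i x_(2n+j-i)` when `i - j > n/2`
(for `0 ≤ i ≤ n`, `0 ≤ j ≤ (n-1)/2`; the sign `(-1)^(i(j-1))` is written as the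
equal quantity `(-1)^(i(j+1))`, and the conditions on `i - j` are stated in `ℤ`). -/
theorem xSol_solves_system (n : ℕ) (hodd : Odd n) (i j : ℕ)
    (hi : i ≤ n) (hj : j ≤ (n - 1) / 2) :
    (2 * ((i : ℤ) - (j : ℤ)) < (n : ℤ) →
      (-1 : ℂ) ^ (i * j) * xSol n (i + j) +
        (-1 : ℂ) ^ (i * (j + 1)) * lam n ^ j * xSol n (n + i - j) = 0) ∧
    (2 * ((i : ℤ) - (j : ℤ)) > (n : ℤ) →
      (-1 : ℂ) ^ (i * j) * xSol n (i + j) +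
        (-1 : ℂ) ^ (i * (j + 1)) * lam n ^ i * xSol n (2 * n + j - i) = 0) := by
  obtain ⟨p, rfl⟩ := hodd
  have hL := lam_pow (2 * p + 1) (by omega)
  have hp : (2 * p + 1 - 1) / 2 = p := by omega
  have hq : (3 * (2 * p + 1) - 1) / 2 = 3 * p + 1 := by omega
  rw [hp] at hj
  simp only [xSol, hp, hq]
  generalize lam (2 * p + 1) = L at *
  constructor
  · intro h
    obtain ⟨e, he⟩ : ∃ e, j + e = p := ⟨p - j, by omega⟩
    obtain ⟨b, hb⟩ : ∃ b, b + i = p + j := ⟨p + j - i, by omega⟩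
    rw [show 3 * p + 1 - (i + j) = b + 2 * e + 1 by omega,
      show 3 * p + 1 - (2 * p + 1 + i - j) = b by omega, sgn_odd,
      sgn_opp (b + e + 1) i p (by omega)]
    have h1 : L ^ (p * (2 * e + 1)) = L ^ j := by
      have h2 : p * (2 * e + 1) + (2 * p + 1) * j = (2 * p + 1) * p + j := by
        subst he; ring
      exact pow_red hL h2
    rw [show b + 2 * e + 1 = (2 * e + 1) + b by ring, pow_add (L ^ p), ← pow_mul L p (2 * e + 1), h1,
      mul_add i j, pow_add _ (i * j)]
    ring
  · intro h
    obtain ⟨f, hf⟩ : ∃ f, f + i = 2 * p + 1 := ⟨2 * p + 1 - i, by omega⟩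
    obtain ⟨b, hb⟩ : ∃ b, b + j + p + 1 = i := ⟨i - j - p - 1, by omega⟩
    rw [show 3 * p + 1 - (i + j) = b + 2 * f by omega,
      show 3 * p + 1 - (2 * (2 * p + 1) + j - i) = b by omega, sgn_even,
      sgn_opp f i p hf]
    have h1 : L ^ (p * (2 * f)) = L ^ i := by
      have h2 : p * (2 * f) + (2 * p + 1) * i = (2 * p + 1) * (2 * p) + i := by
        linear_combination (2 * p) * hf
      exact pow_red hL h2
    rw [show b + 2 * f = 2 * f + b by ring, pow_add (L ^ p), ← pow_mul L p (2 * f), h1,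
      mul_add i j, pow_add _ (i * j)]
    ring
end
end

section
/- Suppose n is even. Then the fixed subring A^G is generated as a ℂ-algebra by the orbit sums of degrees n and 2n; that is, A^G equals the ℂ-subalgebra of A generated by the set {O(a,b,c) : a, b, c ≥ 0, a+2b+c = n} ∪ {O(a,b,c) : a, b, c ≥ 0, a+2b+c = 2n}. (This is the bound β(g) ≤ |G| = 2n for the action on the down-up algebra A(0,1).) -/
/-!
Setting: `lam n = exp(2πi/n)` is a primitive `n`-th root of unity in `ℂ`.
`DUAlg` is the graded down-up algebra `A(0,1) = ℂ⟨u,d⟩/(d²u - ud², du² - u²d)`,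
with generators `uGen`, `dGen`.  The automorphism `g` (of order `2n`) is
determined by `g u = d`, `g d = lam n • u`, and generates the cyclic group `G`,
so that the fixed subring `A^G` is `{a | g a = a}`.  The orbit sum is
`orbitSum n a b c = u^a (du)^b d^c + (lam n)^(b+c) • (d^a (ud)^b u^c)`.
-/

noncomputable section

/-- The defining relations of the down-up algebra `A(0,1)`:
`d²u = ud²` and `du² = u²d` (here `0` plays the role of `u`, `1` of `d`). -/
inductive DownUpRel : FreeAlgebra ℂ (Fin 2) → FreeAlgebra ℂ (Fin 2) → Prop
  | rel1 : DownUpRel (FreeAlgebra.ι ℂ 1 * FreeAlgebra.ι ℂ 1 * FreeAlgebra.ι ℂ 0)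
      (FreeAlgebra.ι ℂ 0 * FreeAlgebra.ι ℂ 1 * FreeAlgebra.ι ℂ 1)
  | rel2 : DownUpRel (FreeAlgebra.ι ℂ 1 * FreeAlgebra.ι ℂ 0 * FreeAlgebra.ι ℂ 0)
      (FreeAlgebra.ι ℂ 0 * FreeAlgebra.ι ℂ 0 * FreeAlgebra.ι ℂ 1)

/-- The graded down-up algebra `A(0,1)`. -/
abbrev DUAlg : Type := RingQuot DownUpRel

/-- The generator `u` of `A(0,1)`. -/
def uGen : DUAlg := RingQuot.mkAlgHom ℂ DownUpRel (FreeAlgebra.ι ℂ 0)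

/-- The generator `d` of `A(0,1)`. -/
def dGen : DUAlg := RingQuot.mkAlgHom ℂ DownUpRel (FreeAlgebra.ι ℂ 1)

/-- Orbit sum `O(a,b,c) = u^a (du)^b d^c + λ^(b+c) d^a (ud)^b u^c`. -/
def orbitSum (n a b c : ℕ) : DUAlg :=
  uGen ^ a * (dGen * uGen) ^ b * dGen ^ c
    + (lam n ^ (b + c)) • (dGen ^ a * (uGen * dGen) ^ b * uGen ^ c)

lemma lam_prim (n : ℕ) (hn : 0 < n) : IsPrimitiveRoot (lam n) n :=
  Complex.isPrimitiveRoot_exp n hn.ne'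

lemma rel_ddu : dGen * dGen * uGen = uGen * dGen * dGen := by
  have := RingQuot.mkAlgHom_rel ℂ DownUpRel.rel1
  simpa [uGen, dGen] using this

lemma rel_duu : dGen * uGen * uGen = uGen * uGen * dGen := by
  have := RingQuot.mkAlgHom_rel ℂ DownUpRel.rel2
  simpa [uGen, dGen] using this

/-- Evaluation of a word in the two generators. -/
def word (l : List Bool) : DUAlg := (l.map (fun b => if b then uGen else dGen)).prod

lemma word_nil : word [] = 1 := by simp [word]

lemma word_cons (b : Bool) (l : List Bool) :
    word (b :: l) = (if b then uGen else dGen) * word l := by simp [word]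

lemma word_append (l l' : List Bool) : word (l ++ l') = word l * word l' := by simp [word]

lemma dd_u : Commute (dGen * dGen) uGen := by
  change _ = _
  rw [rel_ddu, mul_assoc]

lemma uu_d : Commute (uGen * uGen) dGen := by
  change _ = _
  rw [← rel_duu, mul_assoc]

lemma du_pow_mul_u (b : ℕ) : (dGen * uGen) ^ b * uGen = uGen * (uGen * dGen) ^ b := by
  induction b with
  | zero => simp
  | succ b ih =>
    rw [pow_succ, mul_assoc, rel_duu, mul_assoc, ← mul_assoc, ih, pow_succ, mul_assoc]

lemma d_mul_ud_pow (b : ℕ) : dGen * (uGen * dGen) ^ b = (dGen * uGen) ^ b * dGen := by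
  induction b with
  | zero => simp
  | succ b ih =>
    rw [pow_succ, ← mul_assoc, ih, pow_succ]
    simp only [mul_assoc]

lemma norm_mul_u (a b c : ℕ) : ∃ a' b' c' : ℕ, a' + 2 * b' + c' = a + 2 * b + c + 1 ∧
    uGen ^ a * (dGen * uGen) ^ b * dGen ^ c * uGen =
      uGen ^ a' * (dGen * uGen) ^ b' * dGen ^ c' := by
  rcases Nat.even_or_odd c with ⟨k, hk⟩ | ⟨k, hk⟩
  · have hc : dGen ^ c * uGen = uGen * dGen ^ c := by
      have h : dGen ^ c = (dGen * dGen) ^ k := by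
        rw [hk, ← pow_two, ← pow_mul, two_mul]
      rw [h]
      exact (dd_u.pow_left k)
    cases b with
    | zero =>
      refine ⟨a + 1, 0, c, by omega, ?_⟩
      rw [mul_assoc, hc, pow_succ]
      simp [mul_assoc]
    | succ b =>
      refine ⟨a + 2, b, c + 1, by omega, ?_⟩
      have h1 : (dGen * uGen) ^ (b + 1) * uGen = uGen * uGen * (dGen * uGen) ^ b * dGen := by
        rw [du_pow_mul_u, pow_succ', mul_assoc uGen dGen, d_mul_ud_pow]
        simp only [mul_assoc]
      calc uGen ^ a * (dGen * uGen) ^ (b + 1) * dGen ^ c * uGen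
          = uGen ^ a * ((dGen * uGen) ^ (b + 1) * uGen) * dGen ^ c := by
            rw [mul_assoc _ _ uGen, hc]; simp only [mul_assoc]
        _ = _ := by
            rw [h1, pow_succ' dGen, pow_add, pow_two]; simp only [mul_assoc]
  · refine ⟨a, b + 1, 2 * k, by omega, ?_⟩
    have hc : dGen ^ (2 * k) * (dGen * uGen) = dGen * uGen * dGen ^ (2 * k) := by
      have h : dGen ^ (2 * k) = (dGen * dGen) ^ k := by
        rw [← pow_two, ← pow_mul]
      rw [h]
      refine Commute.pow_left ?_ k
      exact Commute.mul_right ((Commute.refl dGen).mul_left (Commute.refl dGen)) dd_u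
    rw [hk, pow_succ dGen, mul_assoc, mul_assoc _ dGen uGen, hc, pow_succ]
    simp only [mul_assoc]

lemma word_normal (l : List Bool) : ∃ a b c : ℕ, a + 2 * b + c = l.length ∧
    word l = uGen ^ a * (dGen * uGen) ^ b * dGen ^ c := by
  induction l using List.reverseRecOn with
  | nil => exact ⟨0, 0, 0, by simp, by simp [word_nil]⟩
  | append_singleton l x ih =>
    obtain ⟨a, b, c, h, hw⟩ := ih
    rw [word_append, hw, word_cons, word_nil, mul_one, List.length_append]
    cases x with
    | true =>
      obtain ⟨a', b', c', h', hw'⟩ := norm_mul_u a b c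
      exact ⟨a', b', c', by simp; omega, by simpa using hw'⟩
    | false =>
      exact ⟨a, b, c + 1, by simp; omega, by simp [pow_succ, mul_assoc]⟩

/-- The even part of the algebra. -/
def evenGens : Set DUAlg := {uGen * uGen, dGen * dGen, uGen * dGen, dGen * uGen}

lemma evenGens_comm : ∀ x ∈ evenGens, ∀ y ∈ evenGens, Commute x y := by
  have uu : ∀ y ∈ evenGens, Commute (uGen * uGen) y := by
    have h : Commute (uGen * uGen) uGen := (Commute.refl uGen).mul_left (Commute.refl uGen)
    rintro y (rfl | rfl | rfl | rfl)
    · exact h.mul_right h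
    · exact uu_d.mul_right uu_d
    · exact h.mul_right uu_d
    · exact uu_d.mul_right h
  have dd : ∀ y ∈ evenGens, Commute (dGen * dGen) y := by
    have h : Commute (dGen * dGen) dGen := (Commute.refl dGen).mul_left (Commute.refl dGen)
    rintro y (rfl | rfl | rfl | rfl)
    · exact dd_u.mul_right dd_u
    · exact h.mul_right h
    · exact dd_u.mul_right h
    · exact h.mul_right dd_u
  have pq : Commute (uGen * dGen) (dGen * uGen) := by
    change _ = _
    calc uGen * dGen * (dGen * uGen) = uGen * (dGen * dGen * uGen) := by simp only [mul_assoc]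
      _ = uGen * uGen * dGen * dGen := by rw [dd_u.eq]; simp only [mul_assoc]
      _ = dGen * uGen * (uGen * dGen) := by rw [uu_d.eq]; simp only [mul_assoc]
  have m1 : uGen * uGen ∈ evenGens := by simp [evenGens]
  have m2 : dGen * dGen ∈ evenGens := by simp [evenGens]
  have m3 : uGen * dGen ∈ evenGens := by simp [evenGens]
  have m4 : dGen * uGen ∈ evenGens := by simp [evenGens]
  rintro x (rfl | rfl | rfl | rfl) y hy
  · exact uu y hy
  · exact dd y hy
  · rcases hy with rfl | rfl | rfl | rfl
    · exact (uu _ m3).symm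
    · exact (dd _ m3).symm
    · exact Commute.refl _
    · exact pq
  · rcases hy with rfl | rfl | rfl | rfl
    · exact (uu _ m4).symm
    · exact (dd _ m4).symm
    · exact pq.symm
    · exact Commute.refl _

lemma even_comm {x y : DUAlg} (hx : x ∈ Algebra.adjoin ℂ evenGens)
    (hy : y ∈ Algebra.adjoin ℂ evenGens) : x * y = y * x := by
  exact (Algebra.commute_of_mem_adjoin_of_forall_mem_commute hy (fun b hb =>
    (Algebra.commute_of_mem_adjoin_of_forall_mem_commute hx
      (fun a ha => evenGens_comm b hb a ha)).symm)).eq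

lemma word_even_mem (k : ℕ) : ∀ l : List Bool, l.length = 2 * k →
    word l ∈ Algebra.adjoin ℂ evenGens := by
  induction k with
  | zero =>
    intro l hl
    have : l = [] := List.length_eq_zero_iff.mp (by simpa using hl)
    subst this
    rw [word_nil]
    exact one_mem _
  | succ k ih =>
    intro l hl
    match l, hl with
    | a :: b :: t, hl =>
      rw [word_cons, word_cons, ← mul_assoc]
      refine mul_mem (Algebra.subset_adjoin ?_) (ih t (by simp at hl; omega))
      cases a <;> cases b <;> simp [evenGens]
    | [], hl => simp at hl
    | [a], hl => simp at hl; omega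

lemma g_even (n : ℕ) (g : DUAlg ≃ₐ[ℂ] DUAlg) (hgu : g uGen = dGen)
    (hgd : g dGen = lam n • uGen) {x : DUAlg} (hx : x ∈ Algebra.adjoin ℂ evenGens) :
    g x ∈ Algebra.adjoin ℂ evenGens := by
  have : Algebra.adjoin ℂ evenGens ≤ (Algebra.adjoin ℂ evenGens).comap g.toAlgHom := by
    refine Algebra.adjoin_le ?_
    rintro y (rfl | rfl | rfl | rfl)
    · simp only [SetLike.mem_coe, Subalgebra.mem_comap]
      change g _ ∈ _
      rw [map_mul, hgu]
      exact Algebra.subset_adjoin (by simp [evenGens])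
    · simp only [SetLike.mem_coe, Subalgebra.mem_comap]
      change g _ ∈ _
      rw [map_mul, hgd, smul_mul_smul_comm]
      exact Subalgebra.smul_mem _ (Algebra.subset_adjoin (by simp [evenGens])) _
    · simp only [SetLike.mem_coe, Subalgebra.mem_comap]
      change g _ ∈ _
      rw [map_mul, hgu, hgd, mul_smul_comm]
      exact Subalgebra.smul_mem _ (Algebra.subset_adjoin (by simp [evenGens])) _
    · simp only [SetLike.mem_coe, Subalgebra.mem_comap]
      change g _ ∈ _
      rw [map_mul, hgu, hgd, smul_mul_assoc]
      exact Subalgebra.smul_mem _ (Algebra.subset_adjoin (by simp [evenGens])) _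
  exact this hx

lemma gg_word (n : ℕ) (g : DUAlg ≃ₐ[ℂ] DUAlg) (hgu : g uGen = dGen)
    (hgd : g dGen = lam n • uGen) (l : List Bool) : g (g (word l)) = lam n ^ l.length • word l := by
  induction l with
  | nil => simp [word_nil]
  | cons b l ih =>
    rw [word_cons, map_mul, map_mul, ih]
    cases b
    · simp [hgu, hgd, pow_succ', smul_smul, mul_comm]
    · simp [hgu, hgd, pow_succ', smul_smul, mul_comm]

lemma gg_normal (n : ℕ) (g : DUAlg ≃ₐ[ℂ] DUAlg) (hgu : g uGen = dGen)
    (hgd : g dGen = lam n • uGen) (a b c : ℕ) : g (g (uGen ^ a * (dGen * uGen) ^ b * dGen ^ c)) =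
    lam n ^ (a + 2 * b + c) • (uGen ^ a * (dGen * uGen) ^ b * dGen ^ c) := by
  simp only [map_mul, map_pow, hgu, hgd, map_smul, smul_mul_smul_comm, smul_pow]
  congr 1
  ring

lemma orbitSum_eq (n : ℕ) (g : DUAlg ≃ₐ[ℂ] DUAlg) (hgu : g uGen = dGen)
    (hgd : g dGen = lam n • uGen) (a b c : ℕ) : orbitSum n a b c =
    uGen ^ a * (dGen * uGen) ^ b * dGen ^ c + g (uGen ^ a * (dGen * uGen) ^ b * dGen ^ c) := by
  rw [orbitSum]
  congr 1
  simp only [map_mul, map_pow, hgu, hgd, smul_pow, smul_mul_assoc, mul_smul_comm, smul_smul,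
    ← pow_add]
  congr 2
  ring

lemma tr_identity (x y z x' y' z' : DUAlg)
    (hC : ∀ s ∈ ({x, y, z, x', y', z'} : Set DUAlg), ∀ t ∈ ({x, y, z, x', y', z'} : Set DUAlg),
      s * t = t * s) :
    x * y * z + x' * y' * z' = (2⁻¹ : ℂ) •
      ((x + x') * (y * z + y' * z') + (y + y') * (x * z + x' * z') + (z + z') * (x * y + x' * y')
        - (x + x') * (y + y') * (z + z')) := by
  let R := Algebra.adjoin ℂ ({x, y, z, x', y', z'} : Set DUAlg)
  letI : CommRing R := Algebra.adjoinCommRingOfComm ℂ hC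
  let X : R := ⟨x, Algebra.subset_adjoin (by simp)⟩
  let Y : R := ⟨y, Algebra.subset_adjoin (by simp)⟩
  let Z : R := ⟨z, Algebra.subset_adjoin (by simp)⟩
  let X' : R := ⟨x', Algebra.subset_adjoin (by simp)⟩
  let Y' : R := ⟨y', Algebra.subset_adjoin (by simp)⟩
  let Z' : R := ⟨z', Algebra.subset_adjoin (by simp)⟩
  have key : (X + X') * (Y * Z + Y' * Z') + (Y + Y') * (X * Z + X' * Z') +
      (Z + Z') * (X * Y + X' * Y') - (X + X') * (Y + Y') * (Z + Z') =
      (X * Y * Z + X' * Y' * Z') + (X * Y * Z + X' * Y' * Z') := by ring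
  have key2 : (x + x') * (y * z + y' * z') + (y + y') * (x * z + x' * z') +
      (z + z') * (x * y + x' * y') - (x + x') * (y + y') * (z + z') =
      (x * y * z + x' * y' * z') + (x * y * z + x' * y' * z') := congrArg Subtype.val key
  rw [key2, ← two_smul ℂ, smul_smul]
  norm_num

lemma word_span (x : DUAlg) : x ∈ Submodule.span ℂ (Set.range word) := by
  obtain ⟨y, rfl⟩ := RingQuot.mkAlgHom_surjective ℂ DownUpRel x
  induction y using FreeAlgebra.induction with
  | grade0 r =>
    rw [AlgHom.commutes, Algebra.algebraMap_eq_smul_one]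
    exact Submodule.smul_mem _ _ (Submodule.subset_span ⟨[], word_nil⟩)
  | grade1 i =>
    fin_cases i
    · exact Submodule.subset_span ⟨[true], by simp [word, uGen]⟩
    · exact Submodule.subset_span ⟨[false], by simp [word, dGen]⟩
  | mul a b ha hb =>
    rw [map_mul]
    have h := Submodule.mul_mem_mul ha hb
    rw [Submodule.span_mul_span] at h
    refine Submodule.span_mono ?_ h
    rintro _ ⟨_, ⟨l, rfl⟩, _, ⟨l', rfl⟩, rfl⟩
    exact ⟨l ++ l', word_append l l'⟩
  | add a b ha hb =>
    rw [map_add]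
    exact add_mem ha hb

lemma tr_word_mem (n : ℕ) (hn : 0 < n) (hne : Even n)
    (g : DUAlg ≃ₐ[ℂ] DUAlg) (hgu : g uGen = dGen) (hgd : g dGen = lam n • uGen) (k : ℕ) :
    ∀ l : List Bool, l.length = k * n → word l + g (word l) ∈ Algebra.adjoin ℂ
        {x : DUAlg | ∃ a b c : ℕ,
          (a + 2 * b + c = n ∨ a + 2 * b + c = 2 * n) ∧ x = orbitSum n a b c} := by
  induction k using Nat.strong_induction_on with
  | _ k ih =>
    intro l hl
    have base : l.length = n ∨ l.length = 2 * n → word l + g (word l) ∈ Algebra.adjoin ℂ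
        {x : DUAlg | ∃ a b c : ℕ,
          (a + 2 * b + c = n ∨ a + 2 * b + c = 2 * n) ∧ x = orbitSum n a b c} := by
      intro h
      obtain ⟨a, b, c, habc, hw⟩ := word_normal l
      refine Algebra.subset_adjoin ⟨a, b, c, by rwa [habc], ?_⟩
      rw [orbitSum_eq n g hgu hgd, hw]
    match k, ih, hl with
    | 0, _, hl =>
      have : l = [] := List.length_eq_zero_iff.mp (by simpa using hl)
      subst this
      rw [word_nil, map_one]
      exact add_mem (one_mem _) (one_mem _)
    | 1, _, hl => exact base (Or.inl (by simpa using hl))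
    | 2, _, hl => exact base (Or.inr hl)
    | k + 3, ih, hl =>
      have hl' : l.length = n + n + (k + 1) * n := by rw [hl]; ring
      obtain ⟨l1, l2, l3, rfl, h1, h2, h3⟩ : ∃ l1 l2 l3 : List Bool, l = l1 ++ l2 ++ l3 ∧
          l1.length = n ∧ l2.length = n ∧ l3.length = (k + 1) * n := by
        refine ⟨l.take n, (l.drop n).take n, (l.drop n).drop n, ?_, ?_, ?_, ?_⟩
        · rw [List.append_assoc, List.take_append_drop, List.take_append_drop]
        · rw [List.length_take]; omega
        · rw [List.length_take, List.length_drop]; omega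
        · rw [List.length_drop, List.length_drop]; omega
      obtain ⟨m, hm⟩ := hne
      have e1 := word_even_mem m l1 (by omega)
      have e2 := word_even_mem m l2 (by omega)
      have e3 := word_even_mem ((k + 1) * m) l3 (by rw [h3, hm]; ring)
      have t1 := ih 1 (by omega) l1 (by omega)
      have t2 := ih 1 (by omega) l2 (by omega)
      have t3 := ih (k + 1) (by omega) l3 h3
      have t12 := ih 2 (by omega) (l1 ++ l2) (by rw [List.length_append]; omega)
      have t13 := ih (k + 2) (by omega) (l1 ++ l3) (by rw [List.length_append, h1, h3]; ring)
      have t23 := ih (k + 2) (by omega) (l2 ++ l3) (by rw [List.length_append, h2, h3]; ring)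
      rw [word_append, map_mul] at t12 t13 t23
      rw [word_append, word_append, map_mul, map_mul, tr_identity]
      · exact Subalgebra.smul_mem _ (sub_mem (add_mem (add_mem (mul_mem t1 t23) (mul_mem t2 t13))
          (mul_mem t3 t12)) (mul_mem (mul_mem t1 t2) t3)) _
      · have hall : ∀ s ∈ ({word l1, word l2, word l3, g (word l1), g (word l2), g (word l3)} :
            Set DUAlg), s ∈ Algebra.adjoin ℂ evenGens := by
          rintro s (rfl | rfl | rfl | rfl | rfl | rfl)
          · exact e1
          · exact e2
          · exact e3
          · exact g_even n g hgu hgd e1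
          · exact g_even n g hgu hgd e2
          · exact g_even n g hgu hgd e3
        intro s hs t ht
        exact even_comm (hall s hs) (hall t ht)

/-- The averaging operator. -/
def avg (n : ℕ) (g : DUAlg ≃ₐ[ℂ] DUAlg) : DUAlg →ₗ[ℂ] DUAlg :=
  ∑ j ∈ Finset.range n, ((g.toLinearMap ∘ₗ g.toLinearMap) ^ j) ∘ₗ (LinearMap.id + g.toLinearMap)

lemma avg_apply (n : ℕ) (g : DUAlg ≃ₐ[ℂ] DUAlg) (x : DUAlg) : avg n g x =
    ∑ j ∈ Finset.range n, ((g.toLinearMap ∘ₗ g.toLinearMap) ^ j) (x + g x) := by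
  simp [avg]

lemma iter_eigen (g : DUAlg ≃ₐ[ℂ] DUAlg) (x : DUAlg) (r : ℂ) (h : g (g x) = r • x) (j : ℕ) :
    ((g.toLinearMap ∘ₗ g.toLinearMap) ^ j) x = r ^ j • x := by
  induction j with
  | zero => simp
  | succ j ih =>
    rw [pow_succ', Module.End.mul_apply, ih, map_smul, LinearMap.comp_apply]
    change _ • g (g x) = _
    rw [h, smul_smul, pow_succ]

lemma avg_mem (n : ℕ) (hn : 0 < n) (hne : Even n)
    (g : DUAlg ≃ₐ[ℂ] DUAlg) (hgu : g uGen = dGen) (hgd : g dGen = lam n • uGen) (x : DUAlg) :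
    avg n g x ∈ Algebra.adjoin ℂ
        {x : DUAlg | ∃ a b c : ℕ,
          (a + 2 * b + c = n ∨ a + 2 * b + c = 2 * n) ∧ x = orbitSum n a b c} := by
  have hx := word_span x
  induction hx using Submodule.span_induction with
  | zero => rw [map_zero]; exact zero_mem _
  | add x y _ _ hx hy => rw [map_add]; exact add_mem hx hy
  | smul r x _ hx => rw [map_smul]; exact Subalgebra.smul_mem _ hx _
  | mem x hx =>
    obtain ⟨l, rfl⟩ := hx
    have h := gg_word n g hgu hgd l
    have h' : g (g (word l + g (word l))) = lam n ^ l.length • (word l + g (word l)) := by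
      rw [map_add, map_add, h, map_smul, smul_add]
    rw [avg_apply, Finset.sum_congr rfl (fun j _ => iter_eigen g _ _ h' j), ← Finset.sum_smul]
    by_cases hd : n ∣ l.length
    · obtain ⟨k, hk⟩ := hd
      exact Subalgebra.smul_mem _ (tr_word_mem n hn hne g hgu hgd k l (by rw [hk, mul_comm])) _
    · have hp := lam_prim n hn
      have h1 : lam n ^ l.length ≠ 1 := fun h => hd (hp.dvd_of_pow_eq_one _ h)
      rw [geom_sum_eq h1, ← pow_mul, mul_comm l.length n, pow_mul, hp.pow_eq_one, one_pow, sub_self, zero_div,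
        zero_smul]
      exact zero_mem _

/-- If `n` is even then the fixed subring `A^G` of the down-up algebra `A(0,1)`
is generated as a `ℂ`-algebra by the orbit sums of degrees `n` and `2n`. -/
theorem fixed_eq_adjoin_of_even (n : ℕ) (hn : 0 < n) (hne : Even n)
    (g : DUAlg ≃ₐ[ℂ] DUAlg) (hgu : g uGen = dGen) (hgd : g dGen = lam n • uGen) :
    {x : DUAlg | g x = x} =
      ↑(Algebra.adjoin ℂ
        {x : DUAlg | ∃ a b c : ℕ,
          (a + 2 * b + c = n ∨ a + 2 * b + c = 2 * n) ∧ x = orbitSum n a b c}) := by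
  have hp := lam_prim n hn
  apply Set.Subset.antisymm
  · intro x hx
    have hx : g x = x := hx
    have h := avg_mem n hn hne g hgu hgd x
    have h1 : g (g (x + g x)) = (1 : ℂ) • (x + g x) := by simp [hx]
    rw [avg_apply, Finset.sum_congr rfl (fun j _ => iter_eigen g _ _ h1 j), ← Finset.sum_smul,
      hx, ← two_smul ℂ x, smul_smul] at h
    have h2 := Subalgebra.smul_mem _ h (((n : ℂ) * 2)⁻¹)
    have hn0 : (n : ℂ) ≠ 0 := by exact_mod_cast hn.ne'
    rw [smul_smul] at h2
    have h3 : ((n : ℂ) * 2)⁻¹ * ((∑ i ∈ Finset.range n, (1 : ℂ) ^ i) * 2) = 1 := by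
      simp only [one_pow, Finset.sum_const, Finset.card_range, nsmul_eq_mul, mul_one]
      field_simp
    rwa [h3, one_smul] at h2
  · have hle : Algebra.adjoin ℂ {x : DUAlg | ∃ a b c : ℕ,
          (a + 2 * b + c = n ∨ a + 2 * b + c = 2 * n) ∧ x = orbitSum n a b c} ≤
        AlgHom.equalizer g.toAlgHom (AlgHom.id ℂ DUAlg) := by
      refine Algebra.adjoin_le ?_
      rintro _ ⟨a, b, c, h, rfl⟩
      change g _ = _
      rw [orbitSum_eq n g hgu hgd, map_add, gg_normal n g hgu hgd]
      have h1 : lam n ^ (a + 2 * b + c) = 1 := by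
        rcases h with h | h
        · rw [h, hp.pow_eq_one]
        · rw [h, mul_comm, pow_mul, hp.pow_eq_one, one_pow]
      rw [h1, one_smul, add_comm]
      rfl
    intro x hx
    exact hle hx
end
end

section
/- Suppose n is even. Then the fixed subring A^G is strictly larger than the ℂ-subalgebra of A generated by the orbit sums of degree n: A^G ≠ the ℂ-subalgebra generated by {O(a,b,c) : a, b, c ≥ 0, a+2b+c = n}. (Together with the upper bound, this shows β(g) = 2n for the action on the down-up algebra A(0,1) when n is even.) -/
/-!
Setting: `lam n = exp(2πi/n)` is a primitive `n`-th root of unity in `ℂ`.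
`DUAlg` is the graded down-up algebra `A(0,1) = ℂ⟨u,d⟩/(d²u - ud², du² - u²d)`,
with generators `uGen`, `dGen`.  The automorphism `g` (of order `2n`) is
determined by `g u = d`, `g d = lam n • u`, and generates the cyclic group `G`,
so that the fixed subring `A^G` is `{a | g a = a}`.  The orbit sum is
`orbitSum n a b c = u^a (du)^b d^c + (lam n)^(b+c) • (d^a (ud)^b u^c)`.
-/

noncomputable section

/-- The one-dimensional representation `u ↦ x`, `d ↦ y`. -/
def duChar (x y : ℂ) : DUAlg →ₐ[ℂ] ℂ :=
  RingQuot.liftAlgHom ℂ ⟨FreeAlgebra.lift ℂ ![x, y], by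
    intro a b h
    cases h <;> simp <;> ring⟩

theorem duChar_u (x y : ℂ) : duChar x y uGen = x := by
  simp [duChar, uGen]

theorem duChar_d (x y : ℂ) : duChar x y dGen = y := by
  simp [duChar, dGen]

/-- If `n` is even then the fixed subring `A^G` of the down-up algebra `A(0,1)`
is strictly larger than the `ℂ`-subalgebra generated by the orbit sums of
degree `n`. -/
theorem fixed_ne_adjoin_of_even (n : ℕ) (hn : 0 < n) (hne : Even n)
    (g : DUAlg ≃ₐ[ℂ] DUAlg) (hgu : g uGen = dGen) (hgd : g dGen = lam n • uGen) :
    {x : DUAlg | g x = x} ≠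
      ↑(Algebra.adjoin ℂ
        {x : DUAlg | ∃ a b c : ℕ, a + 2 * b + c = n ∧ x = orbitSum n a b c}) := by
  have hn0 : (n : ℂ) ≠ 0 := by exact_mod_cast hn.ne'
  obtain ⟨z, hz2, hzn⟩ : ∃ z : ℂ, z ^ 2 = lam n ∧ z ^ n = -1 := by
    refine ⟨Complex.exp ((Real.pi : ℂ) * Complex.I / (n : ℂ)), ?_, ?_⟩
    · rw [← Complex.exp_nat_mul, lam]
      congr 1
      push_cast
      ring
    · rw [← Complex.exp_nat_mul, mul_div_cancel₀ _ hn0, Complex.exp_pi_mul_I]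
  have hln : lam n ^ n = 1 := by
    rw [← hz2, ← pow_mul, mul_comm, pow_mul, hzn]
    norm_num
  intro heq
  have hmem : uGen ^ n * dGen ^ n + dGen ^ n * uGen ^ n ∈ {x : DUAlg | g x = x} := by
    simp only [Set.mem_ofPred_eq, map_add, map_mul, map_pow, hgu, hgd, smul_pow, hln, one_smul]
    rw [add_comm]
  rw [heq] at hmem
  have hle : Algebra.adjoin ℂ
      {x : DUAlg | ∃ a b c : ℕ, a + 2 * b + c = n ∧ x = orbitSum n a b c} ≤
      AlgHom.equalizer (duChar 1 z) (duChar 0 0) := by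
    rw [Algebra.adjoin_le_iff]
    rintro x ⟨a, b, c, habc, rfl⟩
    have h1 : duChar 1 z (orbitSum n a b c) = 0 := by
      simp only [orbitSum, map_add, map_mul, map_pow, map_smul, duChar_u, duChar_d, smul_eq_mul,
        ← hz2]
      have : z ^ (a + 2 * b + c) = -1 := by rw [habc, hzn]
      calc _ = z ^ (b + c) * (1 + z ^ (a + 2 * b + c)) := by ring
        _ = 0 := by rw [this]; ring
    have h0 : duChar 0 0 (orbitSum n a b c) = 0 := by
      simp only [orbitSum, map_add, map_mul, map_pow, map_smul, duChar_u, duChar_d, smul_eq_mul]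
      have h3 : (0 : ℂ) ^ (a + 2 * b + c) = 0 := by rw [habc]; exact zero_pow hn.ne'
      have h4 : (0 : ℂ) ^ a * (0 * 0) ^ b * 0 ^ c = 0 := by
        rw [← pow_two, ← pow_mul, ← pow_add, ← pow_add, h3]
      rw [h4]
      ring
    change duChar 1 z _ = duChar 0 0 _
    rw [h1, h0]
  have h := hle hmem
  change duChar 1 z _ = duChar 0 0 _ at h
  simp only [map_add, map_mul, map_pow, duChar_u, duChar_d, hzn, zero_pow hn.ne'] at h
  norm_num at h
end
end

section
/- Suppose n is odd. Then the fixed subring A^G is strictly larger than the ℂ-subalgebra of A generated by the orbit sums of degrees n and 2n: A^G ≠ the ℂ-subalgebra generated by {O(a,b,c) : a, b, c ≥ 0, a+2b+c ∈ {n, 2n}}. (This is the lower bound β(g) ≥ 3n > |G| = 2n for the action on the down-up algebra A(0,1), so the Noether bound fails.) -/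
/-!
Setting: `lam n = exp(2πi/n)` is a primitive `n`-th root of unity in `ℂ`.
`DUAlg` is the graded down-up algebra `A(0,1) = ℂ⟨u,d⟩/(d²u - ud², du² - u²d)`,
with generators `uGen`, `dGen`.  The automorphism `g` (of order `2n`) is
determined by `g u = d`, `g d = lam n • u`, and generates the cyclic group `G`,
so that the fixed subring `A^G` is `{a | g a = a}`.  The orbit sum is
`orbitSum n a b c = u^a (du)^b d^c + (lam n)^(b+c) • (d^a (ud)^b u^c)`.
-/

noncomputable section

/-- The matrix `J`, image of `u`. -/
def matJ : Matrix (Fin 2) (Fin 2) ℂ := !![0, 1; 1, 0]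

/-- The matrix `K`, image of the rescaled `d`. -/
def matK : Matrix (Fin 2) (Fin 2) ℂ := !![0, 1; -1, 0]

lemma matJ_sq : matJ * matJ = 1 := by
  ext i j; fin_cases i <;> fin_cases j <;> simp [matJ]

lemma matK_sq : matK * matK = -1 := by
  ext i j; fin_cases i <;> fin_cases j <;> simp [matK]

lemma matJ_four : matJ ^ 4 = 1 := by
  rw [show 4 = 2 * 2 from rfl, pow_mul, pow_two matJ, matJ_sq, one_pow]

lemma matK_four : matK ^ 4 = 1 := by
  rw [show 4 = 2 * 2 from rfl, pow_mul, pow_two matK, matK_sq]; simp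

lemma matKJ : matK * matJ = !![1, 0; 0, -1] := by
  ext i j; fin_cases i <;> fin_cases j <;> simp [matK, matJ]

lemma matJK : matJ * matK = !![-1, 0; 0, 1] := by
  ext i j; fin_cases i <;> fin_cases j <;> simp [matK, matJ]

lemma matKJ_four : (matK * matJ) ^ 4 = 1 := by
  rw [matKJ]; ext i j; fin_cases i <;> fin_cases j <;> simp [pow_succ]

lemma matJK_four : (matJ * matK) ^ 4 = 1 := by
  rw [matJK]; ext i j; fin_cases i <;> fin_cases j <;> simp [pow_succ]

/-- The image of the orbit sum, up to a scalar. -/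
def wordSum (a b c : ℕ) : Matrix (Fin 2) (Fin 2) ℂ :=
  matJ ^ a * (matK * matJ) ^ b * matK ^ c + matK ^ a * (matJ * matK) ^ b * matJ ^ c

lemma wordSum_mod (a b c : ℕ) : wordSum a b c = wordSum (a % 4) (b % 4) (c % 4) := by
  unfold wordSum
  rw [pow_eq_pow_mod a matJ_four, pow_eq_pow_mod b matKJ_four, pow_eq_pow_mod c matK_four,
    pow_eq_pow_mod a matK_four, pow_eq_pow_mod b matJK_four, pow_eq_pow_mod c matJ_four]

set_option maxHeartbeats 4000000 in
lemma wordSum_small (a b c : ℕ) (ha : a < 4) (hb : b < 4) (hc : c < 4) :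
    ((a + 2 * b + c) % 4 = 2 → wordSum a b c = 0) ∧
    ((a + 2 * b + c) % 4 = 1 → ∃ t : ℂ, wordSum a b c = !![0, t; 0, 0]) ∧
    ((a + 2 * b + c) % 4 = 3 → ∃ t : ℂ, wordSum a b c = !![0, 0; t, 0]) := by
  refine ⟨fun h => ?_, fun h => ⟨wordSum a b c 0 1, ?_⟩, fun h => ⟨wordSum a b c 1 0, ?_⟩⟩ <;>
  · unfold wordSum
    rw [matKJ, matJK]
    interval_cases a <;> interval_cases b <;> interval_cases c <;>
    first
    | (exfalso; revert h; decide)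
    | (ext i j; fin_cases i <;> fin_cases j <;>
        simp [matJ, matK, pow_succ, Matrix.mul_apply, Fin.sum_univ_two])

lemma wordSum_cases (a b c : ℕ) :
    ((a + 2 * b + c) % 4 = 2 → wordSum a b c = 0) ∧
    ((a + 2 * b + c) % 4 = 1 → ∃ t : ℂ, wordSum a b c = !![0, t; 0, 0]) ∧
    ((a + 2 * b + c) % 4 = 3 → ∃ t : ℂ, wordSum a b c = !![0, 0; t, 0]) := by
  rw [wordSum_mod]
  have h := wordSum_small (a % 4) (b % 4) (c % 4) (Nat.mod_lt _ (by norm_num))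
    (Nat.mod_lt _ (by norm_num)) (Nat.mod_lt _ (by norm_num))
  have e : (a % 4 + 2 * (b % 4) + c % 4) % 4 = (a + 2 * b + c) % 4 := by omega
  rwa [e] at h

/-- Upper triangular matrices with constant diagonal. -/
def upperAlg : Subalgebra ℂ (Matrix (Fin 2) (Fin 2) ℂ) where
  carrier := {M | M 0 0 = M 1 1 ∧ M 1 0 = 0}
  mul_mem' := by
    rintro M N ⟨h1, h2⟩ ⟨h3, h4⟩
    simp [Matrix.mul_apply, Fin.sum_univ_two, h1, h2, h3, h4]
  add_mem' := by
    rintro M N ⟨h1, h2⟩ ⟨h3, h4⟩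
    simp [h1, h2, h3, h4]
  algebraMap_mem' := by
    intro r
    simp [Matrix.algebraMap_matrix_apply]

/-- Lower triangular matrices with constant diagonal. -/
def lowerAlg : Subalgebra ℂ (Matrix (Fin 2) (Fin 2) ℂ) where
  carrier := {M | M 0 0 = M 1 1 ∧ M 0 1 = 0}
  mul_mem' := by
    rintro M N ⟨h1, h2⟩ ⟨h3, h4⟩
    simp [Matrix.mul_apply, Fin.sum_univ_two, h1, h2, h3, h4]
  add_mem' := by
    rintro M N ⟨h1, h2⟩ ⟨h3, h4⟩
    simp [h1, h2, h3, h4]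
  algebraMap_mem' := by
    intro r
    simp [Matrix.algebraMap_matrix_apply]

lemma mem_upperAlg (M : Matrix (Fin 2) (Fin 2) ℂ) :
    M ∈ upperAlg ↔ M 0 0 = M 1 1 ∧ M 1 0 = 0 := Iff.rfl

lemma mem_lowerAlg (M : Matrix (Fin 2) (Fin 2) ℂ) :
    M ∈ lowerAlg ↔ M 0 0 = M 1 1 ∧ M 0 1 = 0 := Iff.rfl

lemma exists_rep (m : ℂ) : ∃ f : DUAlg →ₐ[ℂ] Matrix (Fin 2) (Fin 2) ℂ,
    f uGen = matJ ∧ f dGen = m • matK := by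
  refine ⟨RingQuot.liftAlgHom ℂ ⟨FreeAlgebra.lift ℂ ![matJ, m • matK], ?_⟩, ?_, ?_⟩
  · intro x y h
    cases h
    · simp only [map_mul, FreeAlgebra.lift_ι_apply, Matrix.cons_val_zero, Matrix.cons_val_one,
        mul_assoc]
      simp [← mul_assoc, matK_sq, mul_assoc _ matK matK]
    · simp only [map_mul, FreeAlgebra.lift_ι_apply, Matrix.cons_val_zero, Matrix.cons_val_one,
        mul_assoc]
      simp [← mul_assoc, matJ_sq, mul_assoc _ matJ matJ]
  · simp [uGen]
  · simp [dGen]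

lemma map_orbitSum (n : ℕ) (m : ℂ) (hm : m ^ 2 = lam n) (hmn : m ^ n = 1)
    (f : DUAlg →ₐ[ℂ] Matrix (Fin 2) (Fin 2) ℂ) (hu : f uGen = matJ) (hd : f dGen = m • matK)
    (a b c : ℕ) (h : m ^ (a + 2 * b + c) = 1) :
    f (orbitSum n a b c) = m ^ (b + c) • wordSum a b c := by
  have e : lam n ^ (b + c) * m ^ a * m ^ b = m ^ (b + c) := by
    calc lam n ^ (b + c) * m ^ a * m ^ b = m ^ (b + c) * m ^ (a + 2 * b + c) := by
          rw [← hm]; ring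
      _ = _ := by rw [h, mul_one]
  unfold orbitSum wordSum
  simp only [map_add, map_mul, map_pow, map_smul, hu, hd, smul_add, smul_mul_assoc,
    mul_smul_comm, smul_pow, smul_smul]
  congr 2
  · ring
  · rw [← e]; ring

/-- If `n` is odd then the fixed subring `A^G` of the down-up algebra `A(0,1)`
is strictly larger than the `ℂ`-subalgebra generated by the orbit sums of
degrees `n` and `2n` (the Noether bound fails). -/
theorem fixed_ne_adjoin_of_odd (n : ℕ) (hodd : Odd n)
    (g : DUAlg ≃ₐ[ℂ] DUAlg) (hgu : g uGen = dGen) (hgd : g dGen = lam n • uGen) :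
    {x : DUAlg | g x = x} ≠
      ↑(Algebra.adjoin ℂ
        {x : DUAlg | ∃ a b c : ℕ,
          (a + 2 * b + c = n ∨ a + 2 * b + c = 2 * n) ∧ x = orbitSum n a b c}) := by
  intro heq
  have hn : n ≠ 0 := by rintro rfl; simp at hodd
  obtain ⟨k, hk⟩ := hodd
  have hlam := lam_pow n hn
  obtain ⟨m, hm⟩ : ∃ m, m = lam n ^ (k + 1) := ⟨_, rfl⟩
  have hm2 : m ^ 2 = lam n := by
    rw [hm, ← pow_mul, show (k + 1) * 2 = n + 1 by omega, pow_succ, hlam, one_mul]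
  have hmn : m ^ n = 1 := by
    rw [hm, ← pow_mul, mul_comm, pow_mul, hlam, one_pow]
  obtain ⟨f, hu, hd⟩ := exists_rep m
  have key : ∀ a b c : ℕ, (a + 2 * b + c = n ∨ a + 2 * b + c = 2 * n) →
      f (orbitSum n a b c) = m ^ (b + c) • wordSum a b c := by
    intro a b c h
    apply map_orbitSum n m hm2 hmn f hu hd
    rcases h with h | h
    · rw [h, hmn]
    · rw [h, mul_comm, pow_mul, hmn, one_pow]
  have hfix : uGen ^ (3 * n) + dGen ^ (3 * n) ∈ {x : DUAlg | g x = x} := by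
    simp only [Set.mem_ofPred_eq, map_add, map_pow, hgu, hgd, smul_pow]
    rw [mul_comm 3 n, pow_mul (lam n), hlam, one_pow, one_smul, add_comm]
  rw [heq, SetLike.mem_coe] at hfix
  have himg : f (uGen ^ (3 * n) + dGen ^ (3 * n)) = matJ ^ (3 * n) + matK ^ (3 * n) := by
    simp only [map_add, map_pow, hu, hd, smul_pow]
    rw [mul_comm 3 n, pow_mul m, hmn, one_pow, one_smul]
  have hmod : n % 4 = 1 ∨ n % 4 = 3 := by omega
  rcases hmod with h4 | h4
  · have hle : Algebra.adjoin ℂ {x : DUAlg | ∃ a b c : ℕ,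
        (a + 2 * b + c = n ∨ a + 2 * b + c = 2 * n) ∧ x = orbitSum n a b c}
        ≤ upperAlg.comap f := by
      rw [Algebra.adjoin_le_iff]
      rintro x ⟨a, b, c, h, rfl⟩
      rw [SetLike.mem_coe, Subalgebra.mem_comap, key a b c h]
      apply Subalgebra.smul_mem
      rcases h with h | h
      · obtain ⟨t, ht⟩ := (wordSum_cases a b c).2.1 (by omega)
        rw [ht, mem_upperAlg]; simp
      · rw [(wordSum_cases a b c).1 (by omega)]
        exact Subalgebra.zero_mem _
    have hmem := hle hfix
    rw [Subalgebra.mem_comap, himg, pow_eq_pow_mod _ matJ_four, pow_eq_pow_mod _ matK_four,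
      show 3 * n % 4 = 3 by omega, mem_upperAlg] at hmem
    have h2 := hmem.2
    simp [matJ, matK, pow_succ, Matrix.mul_apply, Fin.sum_univ_two] at h2
    try norm_num at h2
  · have hle : Algebra.adjoin ℂ {x : DUAlg | ∃ a b c : ℕ,
        (a + 2 * b + c = n ∨ a + 2 * b + c = 2 * n) ∧ x = orbitSum n a b c}
        ≤ lowerAlg.comap f := by
      rw [Algebra.adjoin_le_iff]
      rintro x ⟨a, b, c, h, rfl⟩
      rw [SetLike.mem_coe, Subalgebra.mem_comap, key a b c h]
      apply Subalgebra.smul_mem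
      rcases h with h | h
      · obtain ⟨t, ht⟩ := (wordSum_cases a b c).2.2 (by omega)
        rw [ht, mem_lowerAlg]; simp
      · rw [(wordSum_cases a b c).1 (by omega)]
        exact Subalgebra.zero_mem _
    have hmem := hle hfix
    rw [Subalgebra.mem_comap, himg, pow_eq_pow_mod _ matJ_four, pow_eq_pow_mod _ matK_four,
      show 3 * n % 4 = 1 by omega, mem_lowerAlg] at hmem
    have h2 := hmem.2
    simp [matJ, matK] at h2
    try norm_num at h2
end
end
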